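/- Let p, q > 1 and 0 < a ≤ b ≤ 1. Then arcsin_{p,q} is (a,b)-convex on (0,1): for all r, s ∈ (0,1), arcsin_{p,q}(((r^a + s^a)/2)^{1/a}) ≤ ((arcsin_{p,q}(r)^b + arcsin_{p,q}(s)^b)/2)^{1/b}. -/

import Mathlib

open Real Set

/-- `arcsinPQ p q x = ∫₀ˣ (1 - tᵠ)^(-1/p) dt`, the generalized inverse sine. -/
noncomputable def arcsinPQ (p q x : ℝ) : ℝ := ∫ t in (0:ℝ)..x, (1 - t ^ q) ^ (-(1/p))

theorem arcsinPQ_integrand_pos {p q x : ℝ} (hq : 1 < q) (hx : 0 ≤ x) (hx1 : x < 1) :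
    0 < (1 - x ^ q) ^ (-(1/p)) :=
  rpow_pos_of_pos (sub_pos.2 (rpow_lt_one hx hx1 (by linarith))) _

theorem arcsinPQ_integrand_le {p q x y : ℝ} (hp : 1 < p) (hq : 1 < q) (hx : 0 ≤ x)
    (hxy : x ≤ y) (hy : y < 1) :
    (1 - x ^ q) ^ (-(1/p)) ≤ (1 - y ^ q) ^ (-(1/p)) := by
  have h1 : y ^ q < 1 := rpow_lt_one (hx.trans hxy) hy (by linarith)
  have h2 : x ^ q ≤ y ^ q := rpow_le_rpow hx hxy (by linarith)
  have hp' : 0 < 1 / p := by positivity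
  exact rpow_le_rpow_of_nonpos (by linarith) (by linarith) (by linarith)

theorem continuousOn_arcsinPQ_integrand {p q : ℝ} (hq : 1 < q) :
    ContinuousOn (fun t : ℝ => (1 - t ^ q) ^ (-(1/p))) (Ico 0 1) := by
  refine ContinuousOn.rpow_const ?_ fun t ht =>
    Or.inl (sub_pos.2 (rpow_lt_one ht.1 ht.2 (by linarith))).ne'
  exact continuousOn_const.sub (continuousOn_id.rpow_const fun _ _ => Or.inr (by linarith))

theorem intervalIntegrable_arcsinPQ_integrand {p q x : ℝ} (hq : 1 < q) (hx : 0 ≤ x)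
    (hx1 : x < 1) :
    IntervalIntegrable (fun t : ℝ => (1 - t ^ q) ^ (-(1/p))) MeasureTheory.volume 0 x := by
  refine ((continuousOn_arcsinPQ_integrand hq).mono ?_).intervalIntegrable
  rw [uIcc_of_le hx]
  exact fun t ht => ⟨ht.1, ht.2.trans_lt hx1⟩

theorem arcsinPQ_pos {p q x : ℝ} (hq : 1 < q) (hx : 0 < x) (hx1 : x < 1) :
    0 < arcsinPQ p q x :=
  intervalIntegral.intervalIntegral_pos_of_pos_on
    (intervalIntegrable_arcsinPQ_integrand hq hx.le hx1)
    (fun _ ht => arcsinPQ_integrand_pos hq ht.1.le (ht.2.trans hx1)) hx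

theorem hasDerivAt_arcsinPQ {p q x : ℝ} (hq : 1 < q) (hx : 0 < x) (hx1 : x < 1) :
    HasDerivAt (arcsinPQ p q) ((1 - x ^ q) ^ (-(1/p))) x := by
  have hc : ContinuousOn (fun t : ℝ => (1 - t ^ q) ^ (-(1/p))) (Ioo 0 1) :=
    (continuousOn_arcsinPQ_integrand hq).mono Ioo_subset_Ico_self
  exact intervalIntegral.integral_hasDerivAt_right
    (intervalIntegrable_arcsinPQ_integrand hq hx.le hx1)
    (hc.stronglyMeasurableAtFilter isOpen_Ioo x ⟨hx, hx1⟩)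
    (hc.continuousAt (isOpen_Ioo.mem_nhds ⟨hx, hx1⟩))

theorem arcsinPQ_le {p q x y : ℝ} (hq : 1 < q) (hx : 0 < x) (hxy : x ≤ y) (hy : y < 1) :
    arcsinPQ p q x ≤ arcsinPQ p q y := by
  refine intervalIntegral.integral_mono_interval le_rfl hx.le hxy ?_
    (intervalIntegrable_arcsinPQ_integrand hq (hx.le.trans hxy) hy)
  filter_upwards [MeasureTheory.ae_restrict_mem measurableSet_Ioc] with t ht
  exact (arcsinPQ_integrand_pos hq ht.1.le (ht.2.trans_lt hy)).le

/-- The logarithmic derivative of `arcsinPQ p q`, multiplied by `x`, is monotone on `(0, 1)`. -/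
theorem arcsinPQ_elasticity_le {p q x y : ℝ} (hp : 1 < p) (hq : 1 < q) (hx : 0 < x)
    (hxy : x ≤ y) (hy : y < 1) :
    x * (1 - x ^ q) ^ (-(1/p)) / arcsinPQ p q x ≤
      y * (1 - y ^ q) ^ (-(1/p)) / arcsinPQ p q y := by
  have hy0 : 0 < y := hx.trans_le hxy
  have hx1 : x < 1 := hxy.trans_lt hy
  have hc : 1 ≤ y / x := (one_le_div hx).2 hxy
  have hc0 : 0 < y / x := by positivity
  have hcx : y / x * x = y := div_mul_cancel₀ y hx.ne'
  have hscale : arcsinPQ p q y =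
      y / x * ∫ t in (0:ℝ)..x, (1 - (y / x * t) ^ q) ^ (-(1/p)) := by
    rw [intervalIntegral.mul_integral_comp_mul_left
      (f := fun t : ℝ => (1 - t ^ q) ^ (-(1/p))), mul_zero, hcx]
    rfl
  have hint : IntervalIntegrable (fun t : ℝ => (1 - (y / x * t) ^ q) ^ (-(1/p)))
      MeasureTheory.volume 0 x := by
    refine ContinuousOn.intervalIntegrable ?_
    rw [uIcc_of_le hx.le]
    refine (continuousOn_arcsinPQ_integrand hq).comp (by fun_prop) fun t ht => ?_
    refine ⟨mul_nonneg hc0.le ht.1, lt_of_le_of_lt ?_ hy⟩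
    exact (mul_le_mul_of_nonneg_left ht.2 hc0.le).trans_eq hcx
  have key : (1 - x ^ q) ^ (-(1/p)) * ∫ t in (0:ℝ)..x, (1 - (y / x * t) ^ q) ^ (-(1/p)) ≤
      (1 - y ^ q) ^ (-(1/p)) * arcsinPQ p q x := by
    rw [arcsinPQ, ← intervalIntegral.integral_const_mul, ← intervalIntegral.integral_const_mul]
    refine intervalIntegral.integral_mono_on hx.le (hint.const_mul _)
      ((intervalIntegrable_arcsinPQ_integrand hq hx.le hx1).const_mul _) fun t ht => ?_
    have hq0 : 0 < q := by linarith
    have hX : x ^ q < 1 := rpow_lt_one hx.le hx1 hq0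
    have hY : y ^ q < 1 := rpow_lt_one hy0.le hy hq0
    have hT : t ^ q ≤ x ^ q := rpow_le_rpow ht.1 ht.2 hq0.le
    have hC : 1 ≤ (y / x) ^ q := one_le_rpow hc hq0.le
    have hYC : y ^ q = (y / x) ^ q * x ^ q := by rw [← mul_rpow hc0.le hx.le, hcx]
    have hTC : (y / x * t) ^ q = (y / x) ^ q * t ^ q := mul_rpow hc0.le ht.1
    have hTY : (y / x * t) ^ q ≤ y ^ q := by
      rw [hTC, hYC]; exact mul_le_mul_of_nonneg_left hT (by linarith)
    have hp' : 0 < 1 / p := by positivity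
    rw [← mul_rpow (by linarith) (by linarith), ← mul_rpow (by linarith) (by linarith)]
    refine rpow_le_rpow_of_nonpos (mul_pos (by linarith) (by linarith)) ?_ (by linarith)
    rw [hTC, hYC]
    nlinarith [mul_nonneg (sub_nonneg.2 hC) (sub_nonneg.2 hT)]
  rw [div_le_div_iff₀ (arcsinPQ_pos hq hx hx1) (arcsinPQ_pos hq hy0 hy)]
  calc x * (1 - x ^ q) ^ (-(1/p)) * arcsinPQ p q y
      = y * ((1 - x ^ q) ^ (-(1/p)) *
          ∫ t in (0:ℝ)..x, (1 - (y / x * t) ^ q) ^ (-(1/p))) := by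
        rw [hscale]; field_simp
    _ ≤ y * ((1 - y ^ q) ^ (-(1/p)) * arcsinPQ p q x) :=
        mul_le_mul_of_nonneg_left key hy0.le
    _ = _ := by ring

theorem hasDerivAt_arcsinPQ_rpow {p q b u : ℝ} (hq : 1 < q) (hb : 0 < b)
    (hu : u ∈ Ioo (0:ℝ) 1) :
    HasDerivAt (fun u => arcsinPQ p q (u ^ (1/b)) ^ b)
      ((u ^ (1/b) * (1 - (u ^ (1/b)) ^ q) ^ (-(1/p)) / arcsinPQ p q (u ^ (1/b))) ^ (1 - b) *
        ((1 - (u ^ (1/b)) ^ q) ^ (-(1/p))) ^ b) u := by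
  have hx : 0 < u ^ (1/b) := rpow_pos_of_pos hu.1 _
  have hx1 : u ^ (1/b) < 1 := rpow_lt_one hu.1.le hu.2 (by positivity)
  have hf := arcsinPQ_pos (p := p) hq hx hx1
  have hg := arcsinPQ_integrand_pos (p := p) hq hx.le hx1
  have hpow : HasDerivAt (fun u : ℝ => u ^ (1/b)) (1/b * u ^ (1/b - 1)) u :=
    Real.hasDerivAt_rpow_const (Or.inl hu.1.ne')
  have hcomp := (hasDerivAt_arcsinPQ (p := p) hq hx hx1).comp u hpow
  have h := hcomp.rpow_const (p := b) (Or.inl hf.ne')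
  refine h.congr_deriv ?_
  have hux : u ^ (1/b - 1) = (u ^ (1/b)) ^ (1 - b) := by
    rw [← rpow_mul hu.1.le]; congr 1; field_simp
  simp only [Function.comp_apply]
  rw [hux]
  generalize u ^ (1/b) = x at *
  generalize (1 - x ^ q) ^ (-(1/p)) = g at *
  generalize arcsinPQ p q x = f at *
  rw [div_rpow (by positivity) hf.le, mul_rpow hx.le hg.le, rpow_sub hf, rpow_sub hg,
    rpow_sub hf, rpow_one, rpow_one]
  field_simp

theorem convexOn_arcsinPQ_rpow {p q b : ℝ} (hp : 1 < p) (hq : 1 < q) (hb : 0 < b)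
    (hb1 : b ≤ 1) :
    ConvexOn ℝ (Ioo 0 1) fun u => arcsinPQ p q (u ^ (1/b)) ^ b := by
  refine MonotoneOn.convexOn_of_deriv (convex_Ioo 0 1)
    (fun u hu => (hasDerivAt_arcsinPQ_rpow hq hb hu).continuousAt.continuousWithinAt) ?_ ?_
  · rw [interior_Ioo]
    exact fun u hu =>
      (hasDerivAt_arcsinPQ_rpow hq hb hu).differentiableAt.differentiableWithinAt
  · rw [interior_Ioo]
    intro u hu v hv huv
    rw [(hasDerivAt_arcsinPQ_rpow hq hb hu).deriv, (hasDerivAt_arcsinPQ_rpow hq hb hv).deriv]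
    have hx : 0 < u ^ (1/b) := rpow_pos_of_pos hu.1 _
    have hxy : u ^ (1/b) ≤ v ^ (1/b) := rpow_le_rpow hu.1.le huv (by positivity)
    have hy1 : v ^ (1/b) < 1 := rpow_lt_one hv.1.le hv.2 (by positivity)
    have hx1 := hxy.trans_lt hy1
    have hf := arcsinPQ_pos (p := p) hq hx hx1
    have hfy := arcsinPQ_pos (p := p) hq (hx.trans_le hxy) hy1
    have hg := arcsinPQ_integrand_pos (p := p) hq hx.le hx1
    have hgy := arcsinPQ_integrand_pos (p := p) hq (hx.le.trans hxy) hy1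
    have hy : 0 < v ^ (1/b) := hx.trans_le hxy
    exact mul_le_mul
      (rpow_le_rpow (by positivity) (arcsinPQ_elasticity_le hp hq hx hxy hy1) (by linarith))
      (rpow_le_rpow hg.le (arcsinPQ_integrand_le hp hq hx.le hxy hy1) hb.le)
      (by positivity) (by positivity)

/-- Power means of two positive numbers are monotone in the exponent. -/
theorem powerMean_le_powerMean {a b r s : ℝ} (ha : 0 < a) (hab : a ≤ b) (hr : 0 < r)
    (hs : 0 < s) :
    ((r ^ a + s ^ a) / 2) ^ (1/a) ≤ ((r ^ b + s ^ b) / 2) ^ (1/b) := by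
  have hb : 0 < b := ha.trans_le hab
  have hra : r ^ a ∈ Ici (0:ℝ) := rpow_nonneg hr.le a
  have hsa : s ^ a ∈ Ici (0:ℝ) := rpow_nonneg hs.le a
  have hconv := (convexOn_rpow ((one_le_div ha).2 hab)).2 hra hsa
    one_half_pos.le one_half_pos.le (add_halves 1)
  simp only [smul_eq_mul] at hconv
  rw [← rpow_mul hr.le, ← rpow_mul hs.le, mul_div_cancel₀ b ha.ne',
    ← mul_add, ← mul_add, one_div_mul_eq_div, one_div_mul_eq_div] at hconv
  calc ((r ^ a + s ^ a) / 2) ^ (1/a)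
      = (((r ^ a + s ^ a) / 2) ^ (b/a)) ^ (1/b) := by
        rw [← rpow_mul (by positivity)]; congr 1; field_simp
    _ ≤ _ := rpow_le_rpow (by positivity) hconv (by positivity)

theorem arcsinPQ_ab_convex_pos (p q a b : ℝ) (hp : 1 < p) (hq : 1 < q)
    (ha : 0 < a) (hab : a ≤ b) (hb : b ≤ 1)
    (r s : ℝ) (hr : r ∈ Set.Ioo (0:ℝ) 1) (hs : s ∈ Set.Ioo (0:ℝ) 1) :
    arcsinPQ p q (((r ^ a + s ^ a) / 2) ^ (1/a)) ≤
      ((arcsinPQ p q r ^ b + arcsinPQ p q s ^ b) / 2) ^ (1/b) := by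
  have hb0 : 0 < b := ha.trans_le hab
  obtain ⟨hr0, hr1⟩ := hr
  obtain ⟨hs0, hs1⟩ := hs
  have hrb : r ^ b ∈ Ioo (0:ℝ) 1 := ⟨rpow_pos_of_pos hr0 _, rpow_lt_one hr0.le hr1 hb0⟩
  have hsb : s ^ b ∈ Ioo (0:ℝ) 1 := ⟨rpow_pos_of_pos hs0 _, rpow_lt_one hs0.le hs1 hb0⟩
  have hm0 : 0 < (r ^ b + s ^ b) / 2 := by linarith [hrb.1, hsb.1]
  have hM0 : 0 < ((r ^ b + s ^ b) / 2) ^ (1/b) := rpow_pos_of_pos hm0 _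
  have hM1 : ((r ^ b + s ^ b) / 2) ^ (1/b) < 1 :=
    rpow_lt_one hm0.le (by linarith [hrb.2, hsb.2]) (by positivity)
  refine (arcsinPQ_le hq (by positivity) (powerMean_le_powerMean ha hab hr0 hs0) hM1).trans ?_
  have hconv := (convexOn_arcsinPQ_rpow hp hq hb0 hb).2 hrb hsb
    one_half_pos.le one_half_pos.le (add_halves 1)
  simp only [smul_eq_mul] at hconv
  rw [← mul_add, ← mul_add, one_div_mul_eq_div, one_div_mul_eq_div, ← rpow_mul hr0.le,
    ← rpow_mul hs0.le, mul_one_div_cancel hb0.ne', rpow_one, rpow_one] at hconv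
  have hf := (arcsinPQ_pos (p := p) hq hM0 hM1).le
  calc arcsinPQ p q (((r ^ b + s ^ b) / 2) ^ (1/b))
      = (arcsinPQ p q (((r ^ b + s ^ b) / 2) ^ (1/b)) ^ b) ^ (1/b) := by
        rw [← rpow_mul hf, mul_one_div_cancel hb0.ne', rpow_one]
    _ ≤ _ := rpow_le_rpow (by positivity) hconv (by positivity)
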